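/- Monotonicity of the relative entropy of resource under δ-resource-non-generating channels: if Λ is a CPTP map such that R_M(Λ(σ)) ≤ δ for every σ ∈ M (with R_M the generalised robustness), then for every state ρ, D_M(Λ(ρ)) ≤ D_M(ρ) − log(1−δ). -/

import Mathlib

open scoped BigOperators ComplexOrder
noncomputable section

variable {ι κ : Type*} [Fintype ι] [DecidableEq ι] [Fintype κ] [DecidableEq κ]

def IsDensity {α : Type*} [Fintype α] [DecidableEq α] (ρ : Matrix α α ℂ) : Prop :=
  ρ.PosSemidef ∧ ρ.trace = 1

def mlog {α : Type*} [Fintype α] [DecidableEq α] (A : Matrix α α ℂ) : Matrix α α ℂ :=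
  if h : A.IsHermitian then h.cfc Real.log else 0

def SuppLE {α : Type*} [Fintype α] (ρ σ : Matrix α α ℂ) : Prop :=
  ∀ v, σ.mulVec v = 0 → ρ.mulVec v = 0

/-- Umegaki relative entropy, `+∞` if the support condition fails. -/
def relEnt {α : Type*} [Fintype α] [DecidableEq α] (ρ σ : Matrix α α ℂ) : EReal :=
  @ite _ (SuppLE ρ σ) (Classical.propDecidable _)
    (((ρ * (mlog ρ - mlog σ)).trace.re : ℝ) : EReal) ⊤

/-- Generalised robustness with respect to a set `M` of states (`+∞` if infeasible). -/
def Rob {α : Type*} [Fintype α] [DecidableEq α] (M : Set (Matrix α α ℂ))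
    (ρ : Matrix α α ℂ) : EReal :=
  sInf {x : EReal | ∃ s : ℝ, 0 ≤ s ∧
    (∃ σ, IsDensity σ ∧ (((1 + s)⁻¹ : ℂ) • (ρ + (s : ℂ) • σ)) ∈ M) ∧ x = (s : ℝ)}

/-- The map `Λ ⊗ id_k` acting on block matrices. -/
def mapTensorId (Λ : Matrix ι ι ℂ →ₗ[ℂ] Matrix κ κ ℂ) (k : ℕ)
    (A : Matrix (ι × Fin k) (ι × Fin k) ℂ) : Matrix (κ × Fin k) (κ × Fin k) ℂ :=
  fun p q => Λ (Matrix.of fun i j => A (i, p.2) (j, q.2)) p.1 q.1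

/-- Complete positivity. -/
def IsCP (Λ : Matrix ι ι ℂ →ₗ[ℂ] Matrix κ κ ℂ) : Prop :=
  ∀ k (A : Matrix (ι × Fin k) (ι × Fin k) ℂ), A.PosSemidef → (mapTensorId Λ k A).PosSemidef

/-- Trace preservation. -/
def IsTP (Λ : Matrix ι ι ℂ →ₗ[ℂ] Matrix κ κ ℂ) : Prop := ∀ A, (Λ A).trace = A.trace

set_option linter.unusedSimpArgs false
set_option linter.unusedVariables false

theorem classical_aux {I J : Type*} [Fintype I] [Fintype J]
    (w p q : I → ℝ) (w' p' q' : J → ℝ) 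
    (hw : ∀ i, 0 ≤ w i) (hp : ∀ i, 0 ≤ p i) (hq : ∀ i, 0 ≤ q i)
    (hw' : ∀ i, 0 ≤ w' i) (hp' : ∀ i, 0 ≤ p' i) (hq' : ∀ i, 0 ≤ q' i)
    (hwp : ∀ i, p i = 0 → w i = 0) (hwp' : ∀ i, p' i = 0 → w' i = 0)
    (hs : ∀ i, q i = 0 → w i = 0)
    (hsum : ∑ i, w i = ∑ i, w' i)
    (hF : ∀ t, 0 < t → ∑ i, w' i * p' i / (q' i + t * p' i) ≤ ∑ i, w i * p i / (q i + t * p i)) :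
    (∀ i, q' i = 0 → w' i = 0) ∧
    ∑ i, w' i * (Real.log (p' i) - Real.log (q' i)) ≤ ∑ i, w i * (Real.log (p i) - Real.log (q i)) := by
  have hs' : ∀ i, q' i = 0 → w' i = 0 := by
    intro j hj
    by_contra hne
    have hwj : 0 < w' j := lt_of_le_of_ne (hw' j) (Ne.symm hne)
    have hpj : 0 < p' j := lt_of_le_of_ne (hp' j) (fun h => hne (hwp' j h.symm))
    set C := ∑ i, w i * p i / q i with hC
    have hC0 : 0 ≤ C := Finset.sum_nonneg fun i _ => div_nonneg (mul_nonneg (hw i) (hp i)) (hq i)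
    have key : ∀ t, 0 < t → w' j / t ≤ C := by
      intro t ht
      calc w' j / t = w' j * p' j / (q' j + t * p' j) := by
            rw [hj]; field_simp; simp
        _ ≤ ∑ i, w' i * p' i / (q' i + t * p' i) := 
            Finset.single_le_sum (f := fun i => w' i * p' i / (q' i + t * p' i))
              (fun i _ => div_nonneg (mul_nonneg (hw' i) (hp' i))
                (add_nonneg (hq' i) (mul_nonneg ht.le (hp' i)))) (Finset.mem_univ j)
        _ ≤ _ := hF t ht
        _ ≤ C := by
            apply Finset.sum_le_sum
            intro i _
            rcases (hq i).eq_or_lt with h | h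
            · simp [hs i h.symm]
            · apply div_le_div_of_nonneg_left (mul_nonneg (hw i) (hp i)) h
              nlinarith [mul_nonneg ht.le (hp i)]
    have h1 := key (w' j / (C + 1)) (by positivity)
    rw [div_div_cancel₀ hwj.ne'] at h1
    linarith
  refine ⟨hs', ?_⟩
  have hder : ∀ {K : Type _} [Fintype K] (w p q : K → ℝ), (∀ i, 0 ≤ w i) → (∀ i, 0 ≤ p i) →
      (∀ i, 0 ≤ q i) → (∀ i, q i = 0 → w i = 0) → ∀ t, 0 ≤ t → 
      HasDerivAt (fun t => ∑ i, w i * Real.log (q i + t * p i)) 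
        (∑ i, w i * p i / (q i + t * p i)) t := by
    intro K _ w p q hw hp hq hs t ht
    apply HasDerivAt.fun_sum
    intro i _
    rcases (hq i).eq_or_lt with h | h
    · simpa [hs i h.symm] using hasDerivAt_const t (0:ℝ)
    · have h1 : HasDerivAt (fun t => q i + t * p i) (p i) t := by
        simpa using ((hasDerivAt_id t).mul_const (p i)).const_add (q i)
      have := (h1.log (by nlinarith [mul_nonneg ht (hp i)])).const_mul (w i)
      simpa [mul_div_assoc] using this
  have hder' : ∀ {K : Type _} [Fintype K] (w p q : K → ℝ), (∀ i, 0 ≤ w i) → (∀ i, 0 ≤ p i) →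
      (∀ i, 0 ≤ q i) → (∀ i, q i = 0 → w i = 0) → ∀ t, 0 ≤ t → 
      HasDerivAt (fun t => ∑ i, w i * Real.log (q i + t * p i)) 
        (∑ i, w i * p i / (q i + t * p i)) t := by
    intro K _ w p q hw hp hq hs t ht
    apply HasDerivAt.fun_sum
    intro i _
    rcases (hq i).eq_or_lt with h | h
    · simpa [hs i h.symm] using hasDerivAt_const t (0:ℝ)
    · have h1 : HasDerivAt (fun t => q i + t * p i) (p i) t := by
        simpa using ((hasDerivAt_id t).mul_const (p i)).const_add (q i)
      have := (h1.log (by nlinarith [mul_nonneg ht (hp i)])).const_mul (w i)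
      simpa [mul_div_assoc] using this
  have hD : ∀ t, 0 ≤ t → HasDerivAt (fun t => ∑ i, w i * Real.log (q i + t * p i)
      - ∑ i, w' i * Real.log (q' i + t * p' i)) (∑ i, w i * p i / (q i + t * p i) -
        ∑ i, w' i * p' i / (q' i + t * p' i)) t := fun t ht =>
    (hder w p q hw hp hq hs t ht).sub (hder' w' p' q' hw' hp' hq' hs' t ht)
  have hmono := monotoneOn_of_deriv_nonneg (convex_Ici (0:ℝ)) 
    (fun t ht => (hD t ht).continuousAt.continuousWithinAt)
    (fun t ht => (hD t (interior_subset ht)).differentiableAt.differentiableWithinAt)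
    (fun t ht => by
      rw [interior_Ici] at ht
      rw [(hD t (le_of_lt ht)).deriv]
      linarith [hF t ht])
  have hlim : ∀ {K : Type _} [Fintype K] (w p q : K → ℝ), (∀ i, p i = 0 → w i = 0) →
      Filter.Tendsto (fun ε : ℝ => ∑ i, w i * Real.log (ε * q i + p i)) (nhdsWithin 0 (Set.Ioi 0))
        (nhds (∑ i, w i * Real.log (p i))) := by
    intro K _ w p q hwp
    apply tendsto_finsetSum
    intro i _
    by_cases h : p i = 0
    · simp [hwp i h]
    · apply Filter.Tendsto.const_mul
      apply Filter.Tendsto.log _ h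
      have : ContinuousAt (fun ε : ℝ => ε * q i + p i) 0 := by fun_prop
      simpa using this.tendsto.mono_left nhdsWithin_le_nhds
  have hlim' : ∀ {K : Type _} [Fintype K] (w p q : K → ℝ), (∀ i, p i = 0 → w i = 0) →
      Filter.Tendsto (fun ε : ℝ => ∑ i, w i * Real.log (ε * q i + p i)) (nhdsWithin 0 (Set.Ioi 0))
        (nhds (∑ i, w i * Real.log (p i))) := by
    intro K _ w p q hwp
    apply tendsto_finsetSum
    intro i _
    by_cases h : p i = 0
    · simp [hwp i h]
    · apply Filter.Tendsto.const_mul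
      apply Filter.Tendsto.log _ h
      have : ContinuousAt (fun ε : ℝ => ε * q i + p i) 0 := by fun_prop
      simpa using this.tendsto.mono_left nhdsWithin_le_nhds
  have hL := (hlim w p q hwp).sub (hlim' w' p' q' hwp')
  have hfin : ∑ i, w i * Real.log (q i) - ∑ i, w' i * Real.log (q' i) ≤ 
      ∑ i, w i * Real.log (p i) - ∑ i, w' i * Real.log (p' i) := by
    apply ge_of_tendsto hL
    filter_upwards [self_mem_nhdsWithin] with ε hε
    have hε : 0 < ε := hε
    have h1 := hmono (Set.mem_Ici.2 le_rfl) (Set.mem_Ici.2 (inv_pos.2 hε).le) (inv_pos.2 hε).le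
    simp only [zero_mul, add_zero] at h1
    have e : ∀ i, w i * Real.log (q i + ε⁻¹ * p i) = w i * Real.log (ε * q i + p i) - w i * Real.log ε := by
      intro i
      rcases (hp i).eq_or_lt with h | h
      · simp [hwp i h.symm]
      · have : q i + ε⁻¹ * p i = (ε * q i + p i) / ε := by field_simp
        rw [this, Real.log_div (by nlinarith [mul_nonneg hε.le (hq i)]) hε.ne']; ring
    have e' : ∀ i, w' i * Real.log (q' i + ε⁻¹ * p' i) = w' i * Real.log (ε * q' i + p' i) - w' i * Real.log ε := by
      intro i
      rcases (hp' i).eq_or_lt with h | h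
      · simp [hwp' i h.symm]
      · have : q' i + ε⁻¹ * p' i = (ε * q' i + p' i) / ε := by field_simp
        rw [this, Real.log_div (by nlinarith [mul_nonneg hε.le (hq' i)]) hε.ne']; ring
    simp only [e, e', Finset.sum_sub_distrib, ← Finset.sum_mul, hsum] at h1
    linarith
  simp only [mul_sub, Finset.sum_sub_distrib]
  linarith

open Matrix in
theorem spec_aux {α : Type*} [Fintype α] [DecidableEq α] (ρ : Matrix α α ℂ) (h : ρ.PosSemidef) :
    ∃ (U : Matrix α α ℂ) (p : α → ℝ), Uᴴ * U = 1 ∧ U * Uᴴ = 1 ∧ (∀ i, 0 ≤ p i) ∧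
      ρ = U * diagonal (fun i => (p i : ℂ)) * Uᴴ ∧
      mlog ρ = U * diagonal (fun i => (Real.log (p i) : ℂ)) * Uᴴ := by
  refine ⟨h.1.eigenvectorUnitary, h.1.eigenvalues, ?_, ?_, h.eigenvalues_nonneg, ?_, ?_⟩
  · exact Unitary.coe_star_mul_self _
  · exact Unitary.coe_mul_star_self _
  · conv_lhs => rw [h.1.spectral_theorem]
    rfl
  · rw [mlog, dif_pos h.1]
    rfl

def Qf {α : Type*} [Fintype α] (ρ σ : Matrix α α ℂ) (a t : ℝ) (X : Matrix α α ℂ) : ℝ :=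
  2 * (X.conjTranspose * ρ).trace.re - a * (X.conjTranspose * σ * X).trace.re
    - t * (X.conjTranspose * X * ρ).trace.re

open Matrix in
theorem tr_diag_aux {α : Type*} [Fintype α] [DecidableEq α] (A B : Matrix α α ℂ) (d e : α → ℂ) :
    (A * diagonal d * B * diagonal e).trace = ∑ i, ∑ j, A i j * d j * B j i * e i := by
  simp only [trace, diag, mul_diagonal]
  refine Finset.sum_congr rfl fun i _ => ?_
  rw [mul_apply, Finset.sum_mul]
  refine Finset.sum_congr rfl fun j _ => ?_
  rw [mul_diagonal]

theorem scalar_aux (x w : ℂ) (p s : ℝ) (hs : 0 ≤ s) (h : s = 0 → p = 0) :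
    2 * (star x * w * p).re - s * Complex.normSq x ≤ Complex.normSq w * p * p / s := by
  rcases hs.eq_or_lt with h0 | h0
  · simp [← h0, h h0.symm]
  · rw [le_div_iff₀ h0]
    simp only [Complex.normSq_apply, Complex.mul_re, Complex.mul_im, Complex.star_def,
      Complex.conj_re, Complex.conj_im, Complex.ofReal_re, Complex.ofReal_im]
    nlinarith [sq_nonneg (s * x.re - w.re * p), sq_nonneg (s * x.im - w.im * p)]

theorem scalar_aux2 (w : ℂ) (p s : ℝ) :
    2 * (star (w * p / s : ℂ) * w * p).re - s * Complex.normSq (w * p / s)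
      = Complex.normSq w * p * p / s := by
  by_cases h0 : s = 0
  · simp [h0]
  · have : (w * p / s : ℂ) = w * ((p / s : ℝ) : ℂ) := by push_cast; ring
    rw [this]
    simp only [Complex.normSq_apply, Complex.mul_re, Complex.mul_im, Complex.star_def,
      Complex.conj_re, Complex.conj_im, Complex.ofReal_re, Complex.ofReal_im]
    field_simp
    ring

set_option maxHeartbeats 1000000 in
open Matrix in
theorem pair_aux {α : Type*} [Fintype α] [DecidableEq α] (ρ σ : Matrix α α ℂ)
    (hρ : ρ.PosSemidef) (hσ : σ.PosSemidef) :
    ∃ (c : α × α → ℝ) (p q : α × α → ℝ), (∀ k, 0 ≤ c k) ∧ (∀ k, 0 ≤ p k) ∧ (∀ k, 0 ≤ q k) ∧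
      (∀ a t X, 0 < a → 0 < t → Qf ρ σ a t X ≤ ∑ k, c k * p k * p k / (a * q k + t * p k)) ∧
      (∀ a t, 0 < a → 0 < t → ∃ X, Qf ρ σ a t X = ∑ k, c k * p k * p k / (a * q k + t * p k)) ∧
      (ρ * (mlog ρ - mlog σ)).trace.re
        = ∑ k, c k * p k * (Real.log (p k) - Real.log (q k)) ∧
      (SuppLE ρ σ ↔ ∀ k, q k = 0 → c k * p k = 0) ∧ ρ.trace.re = ∑ k, c k * p k := by
  obtain ⟨U, p, hU1, hU2, hp, eρ, lρ⟩ := spec_aux ρ hρ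
  obtain ⟨V, q, hV1, hV2, hq, eσ, lσ⟩ := spec_aux σ hσ
  set W := Vᴴ * U with hW
  have hW1 : Wᴴ * W = 1 := by
    rw [hW, conjTranspose_mul, conjTranspose_conjTranspose]
    calc Uᴴ * V * (Vᴴ * U) = Uᴴ * (V * Vᴴ) * U := by simp only [Matrix.mul_assoc, Matrix.mul_one, Matrix.one_mul]
      _ = 1 := by rw [hV2, mul_one, hU1]
  have hcol : ∀ i, ∑ j, Complex.normSq (W j i) = 1 := by
    intro i
    have := congrFun (congrFun hW1 i) i
    simp only [mul_apply, conjTranspose_apply, one_apply_eq] at this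
    have h2 := congrArg Complex.re this
    simpa [Complex.normSq_apply] using h2
  -- quadratic form in the eigenbases
  have hQ : ∀ a t x, Qf ρ σ a t (V * x * Uᴴ) = ∑ j, ∑ i,
      (2 * (star (x j i) * W j i * p i).re - (a * q j + t * p i) * Complex.normSq (x j i)) := by
    intro a t x
    have e1 : ((V * x * Uᴴ)ᴴ * ρ).trace = ∑ j, ∑ i, star (x j i) * W j i * p i := by
      have : ((V * x * Uᴴ)ᴴ * ρ).trace = (xᴴ * W * diagonal (fun i => (p i : ℂ))).trace := by
        rw [eρ, hW]
        simp only [conjTranspose_mul, conjTranspose_conjTranspose]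
        calc (U * (xᴴ * Vᴴ) * (U * diagonal (fun i => (p i : ℂ)) * Uᴴ)).trace
            = (U * (xᴴ * Vᴴ * U * diagonal (fun i => (p i : ℂ)) * Uᴴ)).trace := by
              congr 1; simp only [Matrix.mul_assoc, Matrix.mul_one, Matrix.one_mul]
          _ = (xᴴ * Vᴴ * U * diagonal (fun i => (p i : ℂ)) * (Uᴴ * U)).trace := by
              rw [trace_mul_comm]; congr 1; simp only [Matrix.mul_assoc, Matrix.mul_one, Matrix.one_mul]
          _ = _ := by rw [hU1, mul_one]; congr 1; simp only [Matrix.mul_assoc, Matrix.mul_one, Matrix.one_mul]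
      rw [this, Finset.sum_comm]
      simp only [trace, diag, mul_diagonal]
      simp only [mul_apply, Finset.sum_mul, conjTranspose_apply]
    have e2 : ((V * x * Uᴴ)ᴴ * σ * (V * x * Uᴴ)).trace
        = ∑ j, ∑ i, (q j : ℂ) * (star (x j i) * x j i) := by
      have : ((V * x * Uᴴ)ᴴ * σ * (V * x * Uᴴ)).trace
          = (xᴴ * diagonal (fun i => (q i : ℂ)) * x).trace := by
        rw [eσ]
        simp only [conjTranspose_mul, conjTranspose_conjTranspose]
        calc (U * (xᴴ * Vᴴ) * (V * diagonal (fun i => (q i : ℂ)) * Vᴴ) * (V * x * Uᴴ)).trace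
            = (U * (xᴴ * (Vᴴ * V) * diagonal (fun i => (q i : ℂ)) * (Vᴴ * V) * x * Uᴴ)).trace := by
              congr 1; simp only [Matrix.mul_assoc, Matrix.mul_one, Matrix.one_mul]
          _ = (xᴴ * diagonal (fun i => (q i : ℂ)) * x * (Uᴴ * U)).trace := by
              rw [trace_mul_comm, hV1]; congr 1; simp only [Matrix.mul_assoc, Matrix.mul_one, Matrix.one_mul]
          _ = _ := by rw [hU1, mul_one]
      rw [this, Finset.sum_comm]
      simp only [trace, diag]
      refine Finset.sum_congr rfl fun i _ => ?_
      rw [mul_apply]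
      refine Finset.sum_congr rfl fun j _ => ?_
      rw [mul_diagonal, conjTranspose_apply]
      ring
    have e3 : ((V * x * Uᴴ)ᴴ * (V * x * Uᴴ) * ρ).trace
        = ∑ j, ∑ i, (p i : ℂ) * (star (x j i) * x j i) := by
      have : ((V * x * Uᴴ)ᴴ * (V * x * Uᴴ) * ρ).trace
          = (xᴴ * x * diagonal (fun i => (p i : ℂ))).trace := by
        rw [eρ]
        simp only [conjTranspose_mul, conjTranspose_conjTranspose]
        calc (U * (xᴴ * Vᴴ) * (V * x * Uᴴ) * (U * diagonal (fun i => (p i : ℂ)) * Uᴴ)).trace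
            = (U * (xᴴ * (Vᴴ * V) * x * (Uᴴ * U) * diagonal (fun i => (p i : ℂ)) * Uᴴ)).trace := by
              congr 1; simp only [Matrix.mul_assoc, Matrix.mul_one, Matrix.one_mul]
          _ = (xᴴ * x * diagonal (fun i => (p i : ℂ)) * (Uᴴ * U)).trace := by
              rw [trace_mul_comm, hV1, hU1]; congr 1; simp only [Matrix.mul_assoc, hU1, Matrix.mul_one, Matrix.one_mul]
          _ = _ := by rw [hU1, mul_one]
      rw [this, Finset.sum_comm]
      simp only [trace, diag, mul_diagonal]
      simp only [mul_apply, Finset.sum_mul, conjTranspose_apply]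
      refine Finset.sum_congr rfl fun i _ => Finset.sum_congr rfl fun j _ => by ring
    rw [Qf, e1, e2, e3]
    simp only [Complex.re_sum, Finset.mul_sum, ← Finset.sum_sub_distrib]
    refine Finset.sum_congr rfl fun i _ => Finset.sum_congr rfl fun j _ => ?_
    have : star (x i j) * x i j = (Complex.normSq (x i j) : ℂ) := Complex.normSq_eq_conj_mul_self.symm
    rw [this, ← Complex.ofReal_mul, ← Complex.ofReal_mul, Complex.ofReal_re, Complex.ofReal_re]
    ring
  refine ⟨fun k => Complex.normSq (W k.1 k.2), fun k => p k.2, fun k => q k.1,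
    fun k => Complex.normSq_nonneg _, fun k => hp _, fun k => hq _, ?_, ?_, ?_, ?_, ?_⟩
  · intro a t X ha ht
    have hX : X = V * (Vᴴ * X * U) * Uᴴ := by
      calc X = (V * Vᴴ) * X * (U * Uᴴ) := by rw [hV2, hU2, one_mul, mul_one]
        _ = _ := by simp only [Matrix.mul_assoc, Matrix.mul_one, Matrix.one_mul]
    rw [hX, hQ, Fintype.sum_prod_type]
    refine Finset.sum_le_sum fun j _ => Finset.sum_le_sum fun i _ => ?_
    have h1 := mul_nonneg ha.le (hq j)
    have h2 := mul_nonneg ht.le (hp i)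
    apply scalar_aux _ _ _ _ (add_nonneg h1 h2)
    intro h
    have : t * p i = 0 := by linarith
    rcases mul_eq_zero.1 this with h | h
    · exact absurd h ht.ne'
    · exact h
  · intro a t ha ht
    refine ⟨V * (Matrix.of fun j i => W j i * p i / ((a * q j + t * p i : ℝ) : ℂ)) * Uᴴ, ?_⟩
    rw [hQ, Fintype.sum_prod_type]
    exact Finset.sum_congr rfl fun j _ => Finset.sum_congr rfl fun i _ => scalar_aux2 _ _ _
  · have t1 : (ρ * mlog ρ).trace = ∑ i, (p i : ℂ) * (Real.log (p i) : ℂ) := by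
      rw [lρ]
      nth_rw 1 [eρ]
      calc (U * diagonal (fun i => (p i : ℂ)) * Uᴴ * (U * diagonal (fun i => (Real.log (p i) : ℂ)) * Uᴴ)).trace
          = (U * (diagonal (fun i => (p i : ℂ)) * (Uᴴ * U) * diagonal (fun i => (Real.log (p i) : ℂ)) * Uᴴ)).trace := by
            congr 1; simp only [Matrix.mul_assoc, Matrix.mul_one, Matrix.one_mul]
        _ = (diagonal (fun i => (p i : ℂ)) * diagonal (fun i => (Real.log (p i) : ℂ)) * (Uᴴ * U)).trace := by
            rw [trace_mul_comm, hU1]; congr 1; simp only [Matrix.mul_assoc, hU1, Matrix.mul_one, Matrix.one_mul]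
        _ = _ := by rw [hU1, mul_one, diagonal_mul_diagonal, trace_diagonal]
    have t2 : (ρ * mlog σ).trace = ∑ j, ∑ i, W j i * (p i : ℂ) * star (W j i) * (Real.log (q j) : ℂ) := by
      rw [lσ, eρ]
      calc (U * diagonal (fun i => (p i : ℂ)) * Uᴴ * (V * diagonal (fun i => (Real.log (q i) : ℂ)) * Vᴴ)).trace
          = (W * diagonal (fun i => (p i : ℂ)) * Wᴴ * diagonal (fun i => (Real.log (q i) : ℂ))).trace := by
            rw [← mul_assoc, trace_mul_comm, hW, conjTranspose_mul, conjTranspose_conjTranspose]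
            congr 1; simp only [Matrix.mul_assoc, Matrix.mul_one, Matrix.one_mul]
        _ = _ := by rw [tr_diag_aux]; rfl
    rw [mul_sub, trace_sub, t1, t2, Complex.sub_re]
    simp only [Complex.re_sum, mul_sub, Finset.sum_sub_distrib]
    congr 1
    · rw [Fintype.sum_prod_type_right]
      refine Finset.sum_congr rfl fun i _ => ?_
      simp only [← Finset.sum_mul, hcol, one_mul]
      simp
    · rw [Fintype.sum_prod_type]
      refine Finset.sum_congr rfl fun j _ => Finset.sum_congr rfl fun i _ => ?_
      have : W j i * (p i : ℂ) * star (W j i) * (Real.log (q j) : ℂ)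
        = ((Complex.normSq (W j i) * p i * Real.log (q j) : ℝ) : ℂ) := by
        push_cast
        rw [← Complex.mul_conj, Complex.star_def]; ring
      rw [this, Complex.ofReal_re]
  · have hWv : Wᴴ = Uᴴ * V := by rw [hW, conjTranspose_mul, conjTranspose_conjTranspose]
    constructor
    · rintro hS ⟨j, i⟩ hk
      simp only at hk ⊢
      have h0 : σ *ᵥ (V *ᵥ Pi.single j 1) = 0 := by
        rw [mulVec_mulVec, eσ, mul_assoc, hV1, mul_one, ← mulVec_mulVec]
        have : diagonal (fun i => (q i : ℂ)) *ᵥ (Pi.single j 1) = 0 := by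
          ext l
          rw [mulVec_diagonal]
          by_cases hl : l = j
          · subst hl; simp [hk]
          · simp [hl]
        rw [this, mulVec_zero]
      have h1 := hS _ h0
      have h2 : diagonal (fun i => (p i : ℂ)) * Wᴴ = Uᴴ * ρ * V := by
        rw [eρ, hWv]
        calc _ = 1 * (diagonal (fun i => (p i : ℂ)) * (Uᴴ * V)) := by rw [one_mul]
          _ = _ := by rw [← hU1]; simp only [Matrix.mul_assoc, Matrix.mul_one, Matrix.one_mul]
      have h3 : (diagonal (fun i => (p i : ℂ)) * Wᴴ) *ᵥ (Pi.single j 1) = 0 := by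
        rw [h2, mul_assoc, ← mulVec_mulVec, ← mulVec_mulVec, h1, mulVec_zero]
      have h4 := congrFun h3 i
      simp only [mulVec_single_one, diagonal_mul, col_apply, conjTranspose_apply, Pi.zero_apply] at h4
      rcases mul_eq_zero.1 h4 with h | h
      · rw [Complex.ofReal_eq_zero.1 h, mul_zero]
      · rw [star_eq_zero.1 h]; simp
    · intro hk v hv
      have h1 : ∀ j, (q j : ℂ) * (Vᴴ *ᵥ v) j = 0 := by
        intro j
        have h2 : diagonal (fun i => (q i : ℂ)) *ᵥ (Vᴴ *ᵥ v) = Vᴴ *ᵥ (σ *ᵥ v) := by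
          rw [mulVec_mulVec, mulVec_mulVec, eσ]
          congr 1
          calc _ = 1 * (diagonal (fun i => (q i : ℂ)) * (Vᴴ)) := by rw [one_mul]
            _ = _ := by rw [← hV1]; simp only [Matrix.mul_assoc, Matrix.mul_one, Matrix.one_mul]
        have h3 := congrFun h2 j
        rw [hv, mulVec_zero, mulVec_diagonal] at h3
        exact h3
      have h2 : ρ *ᵥ v = U *ᵥ (diagonal (fun i => (p i : ℂ)) *ᵥ (Wᴴ *ᵥ (Vᴴ *ᵥ v))) := by
        simp only [mulVec_mulVec]
        rw [hWv, eρ]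
        congr 1
        calc _ = U * diagonal (fun i => (p i : ℂ)) * Uᴴ * 1 := by rw [mul_one]
          _ = _ := by rw [← hV2]; simp only [Matrix.mul_assoc, Matrix.mul_one, Matrix.one_mul]
      rw [h2]
      have : diagonal (fun i => (p i : ℂ)) *ᵥ (Wᴴ *ᵥ (Vᴴ *ᵥ v)) = 0 := by
        ext i
        rw [mulVec_diagonal, mulVec, dotProduct, Finset.mul_sum]
        apply Finset.sum_eq_zero
        intro j _
        rcases mul_eq_zero.1 (h1 j) with h | h
        · have := hk (j, i) (Complex.ofReal_eq_zero.1 h)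
          rcases mul_eq_zero.1 this with h | h
          · simp only at h
            rw [conjTranspose_apply, Complex.normSq_eq_zero.1 h]; simp
          · simp only at h
            simp [h]
        · rw [h]; simp
      rw [this, mulVec_zero]
  · have t1 : ρ.trace = ∑ i, (p i : ℂ) := by
      nth_rw 1 [eρ]
      rw [trace_mul_comm, ← mul_assoc, hU1, one_mul, trace_diagonal]
    rw [t1, Fintype.sum_prod_type_right]
    simp only [Complex.re_sum]
    refine Finset.sum_congr rfl fun i _ => ?_
    simp only [← Finset.sum_mul, hcol, one_mul]
    simp

open Matrix in
theorem cp_block {ι κ : Type*} [Fintype ι] [DecidableEq ι] [Fintype κ] [DecidableEq κ]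
    (Λ : Matrix ι ι ℂ →ₗ[ℂ] Matrix κ κ ℂ) (hCP : IsCP Λ) {σ : Matrix ι ι ℂ} (hσ : σ.PosSemidef)
    (k : ℕ) (R : Fin k → Matrix ι ι ℂ) :
    (∀ a b, (Λ ((R a)ᴴ * σ * R b))ᴴ = Λ ((R b)ᴴ * σ * R a)) ∧
    ∀ S : Fin k → Matrix κ κ ℂ,
      (∑ a, ∑ b, (S a)ᴴ * Λ ((R a)ᴴ * σ * R b) * S b).PosSemidef := by
  let R' : Matrix ι (ι × Fin k) ℂ := fun i j => R j.2 i j.1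
  have hP := hCP k _ (hσ.conjTranspose_mul_mul_same R')
  have hent : ∀ p q, mapTensorId Λ k (R'ᴴ * σ * R') p q
      = Λ ((R p.2)ᴴ * σ * R q.2) p.1 q.1 := by
    intro p q
    rfl
  constructor
  · intro a b
    ext i j
    have := congrFun (congrFun hP.1 (i, b)) (j, a)
    rw [conjTranspose_apply, hent, hent] at this
    simpa using this
  · intro S
    let S' : Matrix (κ × Fin k) κ ℂ := Matrix.of fun p j => S p.2 p.1 j
    have hS' : ∀ p j, S' p j = S p.2 p.1 j := fun _ _ => rfl
    have h2 := hP.conjTranspose_mul_mul_same S'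
    convert h2 using 1
    ext i j
    simp only [mul_apply, Matrix.sum_apply, Fintype.sum_prod_type, Finset.sum_mul, hent,
      conjTranspose_apply, hS']
    rw [Finset.sum_comm]
    conv_rhs => rw [Finset.sum_comm]
    refine Finset.sum_congr rfl fun b _ => ?_
    rw [Finset.sum_comm]
    refine Finset.sum_congr rfl fun l _ => ?_
    rw [Finset.sum_comm]

open Matrix in
theorem herm_pres {ι κ : Type*} [Fintype ι] [DecidableEq ι] [Fintype κ] [DecidableEq κ]
    (Λ : Matrix ι ι ℂ →ₗ[ℂ] Matrix κ κ ℂ) (hCP : IsCP Λ) (A : Matrix ι ι ℂ) :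
    (Λ A)ᴴ = Λ Aᴴ := by
  have := (cp_block Λ hCP (PosSemidef.one (n := ι) (R := ℂ)) 2 ![1, A]).1 0 1
  simpa using this

open Matrix in
theorem pos_pres {ι κ : Type*} [Fintype ι] [DecidableEq ι] [Fintype κ] [DecidableEq κ]
    (Λ : Matrix ι ι ℂ →ₗ[ℂ] Matrix κ κ ℂ) (hCP : IsCP Λ) {A : Matrix ι ι ℂ} (hA : A.PosSemidef) :
    (Λ A).PosSemidef := by
  have := (cp_block Λ hCP hA 1 ![1]).2 ![1]
  simpa using this

open Matrix in
theorem schwarz_aux {ι κ : Type*} [Fintype ι] [DecidableEq ι] [Fintype κ] [DecidableEq κ]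
    (Λ : Matrix ι ι ℂ →ₗ[ℂ] Matrix κ κ ℂ) (hCP : IsCP Λ) (hTP : IsTP Λ)
    {σ : Matrix ι ι ℂ} (hσ : σ.PosSemidef) (X : Matrix ι ι ℂ) (Y : Matrix κ κ ℂ)
    (h1 : ∀ A, (Y * Λ A).trace = (X * A).trace) (h2 : ∀ A, (Yᴴ * Λ A).trace = (Xᴴ * A).trace) :
    (Xᴴ * σ * X).trace.re ≤ (Yᴴ * Λ σ * Y).trace.re := by
  have h := ((cp_block Λ hCP hσ 2 ![X, 1]).2 ![1, -Y]).trace_nonneg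
  simp only [Fin.sum_univ_two, cons_val_zero, cons_val_one, conjTranspose_one, one_mul, mul_one,
    conjTranspose_neg, neg_mul, mul_neg, neg_neg, trace_add, trace_neg, hTP, h2] at h
  rw [trace_mul_comm (Λ (Xᴴ * σ)) Y, h1, ← mul_assoc Xᴴ σ X, trace_mul_comm X, hTP] at h
  have := (Complex.le_def.1 h).1
  simp at this
  linarith

open Matrix in
theorem adj_exists {ι κ : Type*} [Fintype ι] [DecidableEq ι] [Fintype κ] [DecidableEq κ]
    (Λ : Matrix ι ι ℂ →ₗ[ℂ] Matrix κ κ ℂ) (hCP : IsCP Λ) (Y : Matrix κ κ ℂ) :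
    ∃ X : Matrix ι ι ℂ, (∀ A, (Y * Λ A).trace = (X * A).trace) ∧
      (∀ A, (Yᴴ * Λ A).trace = (Xᴴ * A).trace) := by
  have hex : ∀ A, (Y * Λ A).trace
      = ((Matrix.of fun i j => (Y * Λ (single j i 1)).trace : Matrix ι ι ℂ) * A).trace := by
    intro A
    conv_lhs => rw [matrix_eq_sum_single A]
    simp only [map_sum, Finset.mul_sum, trace_sum]
    rw [Finset.sum_comm]
    simp only [trace, diag, mul_apply, of_apply]
    refine Finset.sum_congr rfl fun i _ => Finset.sum_congr rfl fun j _ => ?_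
    have : single j i (A j i) = A j i • single j i (1 : ℂ) := by simp
    rw [this, map_smul]
    simp only [Matrix.smul_apply, smul_eq_mul, Finset.sum_mul]
    refine Finset.sum_congr rfl fun _ _ => Finset.sum_congr rfl fun _ _ => by ring
  refine ⟨_, hex, ?_⟩
  intro A
  have := hex Aᴴ
  have h3 := congrArg star this
  rw [← trace_conjTranspose, ← trace_conjTranspose, conjTranspose_mul, conjTranspose_mul,
    herm_pres Λ hCP, conjTranspose_conjTranspose, trace_mul_comm] at h3
  rw [h3, trace_mul_comm]

open Matrix in
theorem Qf_le {ι κ : Type*} [Fintype ι] [DecidableEq ι] [Fintype κ] [DecidableEq κ]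
    (Λ : Matrix ι ι ℂ →ₗ[ℂ] Matrix κ κ ℂ) (hCP : IsCP Λ) (hTP : IsTP Λ)
    {ρ σ : Matrix ι ι ℂ} (hρ : ρ.PosSemidef) (hσ : σ.PosSemidef) (σ' : Matrix κ κ ℂ)
    (a t : ℝ) (ht : 0 < t) (hle : ((a : ℂ) • σ' - Λ σ).PosSemidef) (Y : Matrix κ κ ℂ) :
    ∃ X, Qf (Λ ρ) σ' a t Y ≤ Qf ρ σ 1 t X := by
  obtain ⟨X, h1, h2⟩ := adj_exists Λ hCP Y
  refine ⟨X, ?_⟩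
  have s1 := schwarz_aux Λ hCP hTP hσ X Y h1 h2
  have s2 := schwarz_aux Λ hCP hTP hρ Xᴴ Yᴴ h2 (by simpa using h1)
  simp only [conjTranspose_conjTranspose] at s2
  have s3 := (Complex.le_def.1 ((hle.conjTranspose_mul_mul_same Y).trace_nonneg)).1
  simp only [mul_sub, sub_mul, trace_sub, mul_smul_comm, smul_mul_assoc, trace_smul, smul_eq_mul,
    Complex.sub_re, Complex.re_ofReal_mul, Complex.zero_re] at s3
  rw [trace_mul_cycle X ρ Xᴴ, trace_mul_cycle Y (Λ ρ) Yᴴ] at s2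
  have s4 := mul_le_mul_of_nonneg_left s2 ht.le
  rw [Qf, Qf, h2]
  linarith

open Matrix in
theorem dpi_aux {ι κ : Type*} [Fintype ι] [DecidableEq ι] [Fintype κ] [DecidableEq κ]
    (Λ : Matrix ι ι ℂ →ₗ[ℂ] Matrix κ κ ℂ) (hCP : IsCP Λ) (hTP : IsTP Λ)
    {ρ σ : Matrix ι ι ℂ} (hρ : IsDensity ρ) (hσ : σ.PosSemidef) (σ' : Matrix κ κ ℂ)
    (hσ' : σ'.PosSemidef) (a : ℝ) (ha : 0 < a)
    (hle : ((a : ℂ) • σ' - Λ σ).PosSemidef) :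
    relEnt (Λ ρ) σ' ≤ relEnt ρ σ + ((Real.log a : ℝ) : EReal) := by
  by_cases hS : SuppLE ρ σ
  swap
  · rw [relEnt, relEnt, if_neg hS]; simp
  obtain ⟨c, p, q, hc, hp, hq, hA, -, hD, hSu, hT⟩ := pair_aux ρ σ hρ.1 hσ
  obtain ⟨c', p', q', hc', hp', hq', -, hB', hD', hSu', hT'⟩ :=
    pair_aux (Λ ρ) σ' (pos_pres Λ hCP hρ.1) hσ'
  have tr1 : ρ.trace.re = 1 := by rw [hρ.2]; simp
  have tr2 : (Λ ρ).trace.re = 1 := by rw [hTP, hρ.2]; simp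
  obtain ⟨hs', hmain⟩ := classical_aux (fun k => c k * p k) p q (fun k => c' k * p' k) p'
    (fun k => a * q' k)
    (fun k => mul_nonneg (hc k) (hp k)) hp hq (fun k => mul_nonneg (hc' k) (hp' k)) hp'
    (fun k => mul_nonneg ha.le (hq' k)) (fun k h => by simp [h]) (fun k h => by simp [h])
    (hSu.1 hS) (by rw [← hT, ← hT', tr1, tr2]) (by
      intro t ht
      obtain ⟨Y, hY⟩ := hB' a t ha ht
      obtain ⟨X, hX⟩ := Qf_le Λ hCP hTP hρ.1 hσ σ' a t ht hle Y
      have := hA 1 t X one_pos ht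
      simp only [one_mul] at this
      rw [← hY]
      exact hX.trans this)
  have hs'' : ∀ k, q' k = 0 → c' k * p' k = 0 := fun k h => hs' k (by simp [h])
  have hS' := hSu'.2 hs''
  rw [relEnt, relEnt, if_pos hS, if_pos hS', ← EReal.coe_add, EReal.coe_le_coe_iff, hD, hD']
  have e : ∀ k, c' k * p' k * (Real.log (p' k) - Real.log (a * q' k))
      = c' k * p' k * (Real.log (p' k) - Real.log (q' k)) - c' k * p' k * Real.log a := by
    intro k
    by_cases h : q' k = 0
    · simp [hs'' k h]
    · rw [Real.log_mul ha.ne' h]; ring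
  simp only [e, Finset.sum_sub_distrib] at hmain
  rw [← Finset.sum_mul, ← hT', tr2] at hmain
  linarith

/-- Monotonicity of the relative entropy of resource under
`δ`-resource-non-generating channels: if `Λ` is CPTP and `R_{M'}(Λ(σ)) ≤ δ` for every
`σ ∈ M`, then `D_{M'}(Λ(ρ)) ≤ D_M(ρ) - log(1-δ)` for every state `ρ`. -/
theorem DRes_monotone_delta_rng
    (M : Set (Matrix ι ι ℂ)) (M' : Set (Matrix κ κ ℂ))
    (hMd : ∀ σ ∈ M, IsDensity σ) (hMc : IsClosed M) (hMconv : Convex ℝ M)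
    (hM'd : ∀ σ ∈ M', IsDensity σ) (hM'c : IsClosed M') (hM'conv : Convex ℝ M')
    (δ : ℝ) (hδ0 : 0 ≤ δ) (hδ1 : δ < 1)
    (Λ : Matrix ι ι ℂ →ₗ[ℂ] Matrix κ κ ℂ) (hCP : IsCP Λ) (hTP : IsTP Λ)
    (hRNG : ∀ σ ∈ M, Rob M' (Λ σ) ≤ ((δ : ℝ) : EReal))
    (ρ : Matrix ι ι ℂ) (hρ : IsDensity ρ) :
    (⨅ σ' ∈ M', relEnt (Λ ρ) σ') ≤ (⨅ σ ∈ M, relEnt ρ σ) - ((Real.log (1 - δ) : ℝ) : EReal) := by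
  have step : ∀ σ ∈ M, ∀ s : ℝ, δ < s →
      (⨅ σ' ∈ M', relEnt (Λ ρ) σ') ≤ relEnt ρ σ + ((Real.log (1 + s) : ℝ) : EReal) := by
    intro σ hσ s hs
    have h1 : Rob M' (Λ σ) < ((s : ℝ) : EReal) :=
      lt_of_le_of_lt (hRNG σ hσ) (EReal.coe_lt_coe_iff.2 hs)
    rw [Rob, sInf_lt_iff] at h1
    obtain ⟨x, ⟨r, hr0, ⟨ω, hω, hmem⟩, rfl⟩, hx⟩ := h1
    have hrs : r < s := EReal.coe_lt_coe_iff.1 hx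
    refine (iInf₂_le _ hmem).trans ?_
    refine (dpi_aux Λ hCP hTP hρ (hMd σ hσ).1 _ (hM'd _ hmem).1 (1 + r) (by linarith) ?_).trans ?_
    · have hne : (1 + (r : ℂ)) ≠ 0 := by
        have : (1 + r : ℝ) ≠ 0 := by linarith
        exact_mod_cast this
      have : (((1 + r : ℝ) : ℂ) • ((1 + (r : ℂ))⁻¹ • (Λ σ + (r : ℂ) • ω)) - Λ σ) = (r : ℂ) • ω := by
        push_cast
        rw [smul_smul, mul_inv_cancel₀ hne, one_smul, add_sub_cancel_left]
      rw [this]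
      exact hω.1.smul (by exact_mod_cast hr0)
    · gcongr
  have hlog : Real.log (1 + δ) ≤ - Real.log (1 - δ) := by
    rw [← Real.log_inv]
    apply Real.log_le_log (by linarith)
    rw [le_inv_comm₀ (by linarith) (by linarith), inv_eq_one_div, le_div_iff₀ (by linarith)]
    nlinarith
  have step2 : ∀ σ ∈ M, (⨅ σ' ∈ M', relEnt (Λ ρ) σ')
      ≤ relEnt ρ σ + ((Real.log (1 + δ) : ℝ) : EReal) := by
    intro σ hσ
    by_cases hS : SuppLE ρ σ
    swap
    · rw [relEnt.eq_1 ρ σ, if_neg hS]; simp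
    have hst := step σ hσ
    rw [relEnt.eq_1 ρ σ, if_pos hS] at hst ⊢
    have hc : ContinuousAt (fun s : ℝ => (((ρ * (mlog ρ - mlog σ)).trace.re + Real.log (1 + s) : ℝ) : EReal)) δ := by
      apply continuous_coe_real_ereal.continuousAt.comp
      have : (1 + δ) ≠ 0 := by linarith
      fun_prop (disch := assumption)
    have hc' := hc.tendsto.mono_left (nhdsWithin_le_nhds (s := Set.Ioi δ))
    rw [← EReal.coe_add]
    apply ge_of_tendsto hc'
    filter_upwards [self_mem_nhdsWithin] with s hs
    rw [EReal.coe_add]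
    exact hst s hs
  rw [EReal.le_sub_iff_add_le (by simp) (by simp)]
  refine le_iInf₂ fun σ hσ => ?_
  rw [← EReal.le_sub_iff_add_le (by simp) (by simp)]
  refine (step2 σ hσ).trans ?_
  rw [sub_eq_add_neg, ← EReal.coe_neg]
  gcongr
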